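/- A quasigroup Q is trimedial if and only if it satisfies the two identities (y·z)·(x·x) = (y·x)·(z·x) and (x·(x·x))·(u·v) = (x·u)·((x·x)·v) for all elements of Q. -/

import Mathlib

/-!
Say that a magma is medial at `(w, x, y, z)` if `(w * x) * (y * z) = (w * y) * (x * z)`. The two
identities are mediality at `(y, z, x, x)` and at `(x, x * x, u, v)`. In a quasigroup they imply
mediality at `(u, w, v, u * v)`, and from this mediality at `(x, x, y, z)`, the mirror image of
`(y, z, x, x)`.

Given mediality at `(x, x, y, z)` and `(y, z, x, x)`, mediality at `(a, b, c, d)` behaves like the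
vanishing of a multilinear alternating form: if mediality holds at `(a, b, c, d)`, then it holds at
`(a', b, c, d)` if and only if it holds at `(a * a', b * b, c * c, d * d)`, and similarly in the
other positions. Polarizing the law at `(a * b, a * b, c, d)` shows that mediality at a quadruple
does not depend on the order of its entries. The identity for `x * (x * x)` makes it insensitive to
squaring an entry, so the squares created by multiplying one entry can be removed again. Hence
mediality on a set extends to the subgroupoid generated by it, and on a three-element set it is
clear because two of the four entries coincide.
-/

/-- A quasigroup structure on a type: a binary operation whose left and right
translations are bijections. -/
def IsQuasigroup (Q : Type*) [Mul Q] : Prop :=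
  (∀ a : Q, Function.Bijective fun x : Q => a * x) ∧
  (∀ a : Q, Function.Bijective fun x : Q => x * a)

/-- A quasigroup is trimedial if every subgroupoid generated by three elements is
medial, i.e. satisfies (w·x)·(y·z) = (w·y)·(x·z). -/
def IsTrimedial (Q : Type*) [Mul Q] : Prop :=
  ∀ a b c : Q, ∀ w x y z : Q,
    w ∈ Subsemigroup.closure {a, b, c} → x ∈ Subsemigroup.closure {a, b, c} →
    y ∈ Subsemigroup.closure {a, b, c} → z ∈ Subsemigroup.closure {a, b, c} →
    (w * x) * (y * z) = (w * y) * (x * z)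

/-- The medial law at the quadruple `(w, x, y, z)`. -/
def MedialAt {Q : Type*} [Mul Q] (w x y z : Q) : Prop :=
  (w * x) * (y * z) = (w * y) * (x * z)

/-- The left semimedial law: the medial law at `(x, x, y, z)`. -/
def LeftSemimedial (Q : Type*) [Mul Q] : Prop :=
  ∀ x y z : Q, (x * x) * (y * z) = (x * y) * (x * z)

/-- The right semimedial law: the medial law at `(y, z, x, x)`. -/
def RightSemimedial (Q : Type*) [Mul Q] : Prop :=
  ∀ x y z : Q, (y * z) * (x * x) = (y * x) * (z * x)

/-- Mediality at the quadruples `(x, x * x, u, v)`, an identity describing left translation by the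
cube `x * (x * x)`. -/
def CubeMedial (Q : Type*) [Mul Q] : Prop :=
  ∀ x u v : Q, (x * (x * x)) * (u * v) = (x * u) * ((x * x) * v)

section

variable {Q : Type*} [Mul Q]

namespace IsQuasigroup

theorem isCancelMul (hQ : IsQuasigroup Q) : IsCancelMul Q where
  mul_left_cancel a := (hQ.1 a).injective
  mul_right_cancel a := (hQ.2 a).injective

theorem exists_mul_left_eq (hQ : IsQuasigroup Q) (a b : Q) : ∃ x, a * x = b :=
  (hQ.1 a).surjective b

theorem exists_mul_right_eq (hQ : IsQuasigroup Q) (a b : Q) : ∃ x, x * a = b :=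
  (hQ.2 a).surjective b

end IsQuasigroup

theorem medialAt_mul [IsRightCancelMul Q] (hR : RightSemimedial Q) (hC : CubeMedial Q)
    (u w v : Q) : MedialAt u w v (u * v) := by
  generalize hx : u * v = x
  refine mul_right_cancel (b := (x * x) * (v * x)) ?_
  calc (u * w) * (v * x) * ((x * x) * (v * x))
      = ((u * w) * (x * x)) * ((v * x) * (v * x)) := (hR _ _ _).symm
    _ = ((u * x) * (w * x)) * ((v * x) * (v * x)) := by rw [hR x u w]
    _ = ((u * x) * (v * x)) * ((w * x) * (v * x)) := hR _ _ _
    _ = (x * (x * x)) * ((w * x) * (v * x)) := by rw [← hR x u v, hx]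
    _ = (u * v) * (w * x) * ((x * x) * (v * x)) := by rw [hC, hx]

theorem LeftSemimedial.medialAt_iff [IsLeftCancelMul Q] (hL : LeftSemimedial Q)
    {a b c d k s : Q} (hk : a * k = c * d) (hs : a * s = b * d) :
    MedialAt a b c d ↔ b * k = c * s := by
  rw [MedialAt, ← hk, ← hs, ← hL, ← hL, mul_right_inj]

theorem CubeMedial.medialAt_iff [IsLeftCancelMul Q] (hC : CubeMedial Q) {a b c d k s : Q}
    (hk : (a * a) * k = c * d) (hs : (a * a) * s = b * d) :
    MedialAt a b c d ↔ b * k = c * s := by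
  rw [MedialAt, ← hk, ← hs, ← hC, ← hC, mul_right_inj]

theorem medialAt_of_mul_eq_self (hQ : IsQuasigroup Q) (hR : RightSemimedial Q)
    (hC : CubeMedial Q) {e x : Q} (he : e * x = x) (a g : Q) : MedialAt a e g x := by
  have := hQ.isCancelMul
  obtain ⟨k, hk⟩ := hQ.exists_mul_left_eq (a * a) (g * x)
  obtain ⟨s, hs⟩ := hQ.exists_mul_left_eq (a * a) x
  rw [hC.medialAt_iff hk (hs.trans he.symm)]
  refine mul_right_cancel (b := x * x) ?_
  calc (e * k) * (x * x) = x * (k * x) := by rw [hR, he]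
    _ = ((a * a) * k) * (s * x) := by rw [← hs, medialAt_mul hR hC]
    _ = (g * s) * (x * x) := by rw [hk, hR]

theorem leftSemimedial (hQ : IsQuasigroup Q) (hR : RightSemimedial Q) (hC : CubeMedial Q) :
    LeftSemimedial Q := by
  intro x y z
  have := hQ.isCancelMul
  obtain ⟨v, rfl⟩ := hQ.exists_mul_right_eq x z
  obtain ⟨a, ha⟩ := hQ.exists_mul_right_eq v x
  obtain ⟨g, hg⟩ := hQ.exists_mul_right_eq x y
  obtain ⟨e, he⟩ := hQ.exists_mul_right_eq x x
  have translate (t : Q) : (a * t) * (v * x) = x * (t * x) := by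
    simpa only [MedialAt, ha] using medialAt_mul hR hC a t v
  calc (x * x) * (y * (v * x)) = ((a * e) * (v * x)) * (y * (v * x)) := by rw [translate, he]
    _ = ((a * e) * (g * x)) * ((v * x) * (v * x)) := by rw [← hR, hg]
    _ = ((a * g) * (e * x)) * ((v * x) * (v * x)) := by
      rw [medialAt_of_mul_eq_self hQ hR hC he]
    _ = ((a * g) * (v * x)) * (x * (v * x)) := by rw [he, hR]
    _ = (x * y) * (x * (v * x)) := by rw [translate, hg]

section Opposite

open MulOpposite

theorem LeftSemimedial.op (hL : LeftSemimedial Q) : RightSemimedial Qᵐᵒᵖ :=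
  fun x y z => unop_injective (hL x.unop z.unop y.unop)

theorem RightSemimedial.op (hR : RightSemimedial Q) : LeftSemimedial Qᵐᵒᵖ :=
  fun x y z => unop_injective (hR x.unop z.unop y.unop)

theorem medialAt_op {a b c d : Q} : MedialAt (op d) (op c) (op b) (op a) ↔ MedialAt a b c d :=
  op_inj

end Opposite

namespace MedialAt

variable {a a' b b' c d d' : Q}

theorem swap_middle (h : MedialAt a b c d) : MedialAt a c b d :=
  Eq.symm h

theorem mul_first_iff [IsLeftCancelMul Q] (hR : RightSemimedial Q) (h : MedialAt a b c d) :
    MedialAt (a * a') (b * b) (c * c) (d * d) ↔ MedialAt a' b c d := by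
  have expand (b c : Q) : ((a * a') * (b * b)) * ((c * c) * (d * d)) =
      ((a * b) * (c * d)) * ((a' * b) * (c * d)) := by
    rw [hR b, hR d c c, hR (c * d)]
  rw [MedialAt, expand, expand, h, mul_right_inj, MedialAt]

theorem mul_second_iff [IsRightCancelMul Q] (hL : LeftSemimedial Q) (hR : RightSemimedial Q)
    (h : MedialAt a b' c d) :
    MedialAt (a * a) (b * b') (c * c) (d * d) ↔ MedialAt a b c d := by
  have expand_left : ((a * a) * (b * b')) * ((c * c) * (d * d)) =
      ((a * b) * (c * d)) * ((a * b') * (c * d)) := by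
    rw [hL a, hR d c c, hR (c * d)]
  have expand_right : ((a * a) * (c * c)) * ((b * b') * (d * d)) =
      ((a * c) * (b * d)) * ((a * c) * (b' * d)) := by
    rw [hL a, hR d b b', hL (a * c)]
  rw [MedialAt, expand_left, expand_right, h, mul_left_inj, MedialAt]

theorem mul_fourth_iff [IsRightCancelMul Q] (hL : LeftSemimedial Q) (h : MedialAt a b c d) :
    MedialAt (a * a) (b * b) (c * c) (d' * d) ↔ MedialAt a b c d' := by
  rw [← medialAt_op, ← medialAt_op (d := d')]
  exact mul_first_iff hL.op (medialAt_op.2 h)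

theorem swap_left [IsCancelMul Q] (hL : LeftSemimedial Q) (hR : RightSemimedial Q)
    (h : MedialAt a b c d) : MedialAt b a c d := by
  have haab : MedialAt (a * a) (a * b) (c * c) (d * d) :=
    (h.mul_second_iff hL hR).2 (hL a c d)
  have hprod : MedialAt ((a * a) * (b * b)) ((a * b) * (a * b))
      ((c * c) * (c * c)) ((d * d) * (d * d)) := by
    rw [hL a b b]
    exact hL _ _ _
  have hbab : MedialAt (b * b) (a * b) (c * c) (d * d) := (haab.mul_first_iff hR).1 hprod
  exact (mul_second_iff hL hR (hL b c d)).1 hbab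

theorem swap_right [IsCancelMul Q] (hL : LeftSemimedial Q) (hR : RightSemimedial Q)
    (h : MedialAt a b c d) : MedialAt a b d c :=
  medialAt_op.1 (swap_left hR.op hL.op (medialAt_op.2 h))

theorem rotate [IsCancelMul Q] (hL : LeftSemimedial Q) (hR : RightSemimedial Q)
    (h : MedialAt a b c d) : MedialAt d a b c :=
  (h.swap_right hL hR).swap_middle.swap_left hL hR

end MedialAt

theorem medialAt_mul_self_iff (hQ : IsQuasigroup Q) (hL : LeftSemimedial Q) (hC : CubeMedial Q)
    {a b c d : Q} : MedialAt (a * a) b c d ↔ MedialAt a b c d := by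
  have := hQ.isCancelMul
  obtain ⟨k, hk⟩ := hQ.exists_mul_left_eq (a * a) (c * d)
  obtain ⟨s, hs⟩ := hQ.exists_mul_left_eq (a * a) (b * d)
  rw [hL.medialAt_iff hk hs, hC.medialAt_iff hk hs]

theorem MedialAt.mul_fourth (hQ : IsQuasigroup Q) (hL : LeftSemimedial Q)
    (hR : RightSemimedial Q) (hC : CubeMedial Q) {a b c d e : Q} (hd : MedialAt a b c d)
    (he : MedialAt a b c e) : MedialAt a b c (d * e) := by
  have := hQ.isCancelMul
  have unsquare {w x y z : Q} : MedialAt (w * w) x y z → MedialAt w x y z :=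
    (medialAt_mul_self_iff hQ hL hC).1
  have habc : MedialAt (a * a) (b * b) (c * c) (d * e) := (he.mul_fourth_iff hL).2 hd
  have hbac : MedialAt b a (c * c) (d * e) := unsquare ((unsquare habc).swap_left hL hR)
  have hcba : MedialAt c b a (d * e) := unsquare (hbac.swap_middle.swap_left hL hR)
  exact (hcba.swap_middle.swap_left hL hR).swap_middle

theorem medialAt_of_mem_closure (hQ : IsQuasigroup Q) (hL : LeftSemimedial Q)
    (hR : RightSemimedial Q) (hC : CubeMedial Q) {s : Set Q}
    (hs : ∀ w ∈ s, ∀ x ∈ s, ∀ y ∈ s, ∀ z ∈ s, MedialAt w x y z) :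
    ∀ w ∈ Subsemigroup.closure s, ∀ x ∈ Subsemigroup.closure s,
      ∀ y ∈ Subsemigroup.closure s, ∀ z ∈ Subsemigroup.closure s, MedialAt w x y z := by
  have := hQ.isCancelMul
  have extend_rotate {A B C : Set Q} (h : ∀ w ∈ A, ∀ x ∈ B, ∀ y ∈ C, ∀ z ∈ s, MedialAt w x y z) :
      ∀ z ∈ (Subsemigroup.closure s : Set Q), ∀ w ∈ A, ∀ x ∈ B, ∀ y ∈ C, MedialAt z w x y := by
    intro z hz w hw x hx y hy
    refine MedialAt.rotate hL hR ?_
    induction hz using Subsemigroup.closure_induction with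
    | mem z hz => exact h w hw x hx y hy z hz
    | mul z z' _ _ hz hz' => exact hz.mul_fourth hQ hL hR hC hz'
  exact extend_rotate (extend_rotate (extend_rotate (extend_rotate hs)))

theorem medialAt_of_mem_triple [IsCancelMul Q] (hL : LeftSemimedial Q) (hR : RightSemimedial Q)
    {a b c w x y z : Q} (hw : w ∈ ({a, b, c} : Set Q)) (hx : x ∈ ({a, b, c} : Set Q))
    (hy : y ∈ ({a, b, c} : Set Q)) (hz : z ∈ ({a, b, c} : Set Q)) : MedialAt w x y z := by
  have hL' (x y z : Q) : MedialAt x x y z := hL x y z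
  have hR' (x y z : Q) : MedialAt y z x x := hR x y z
  have coincidence : w = x ∨ w = y ∨ w = z ∨ x = y ∨ x = z ∨ y = z := by
    simp only [Set.mem_insert_iff, Set.mem_singleton_iff] at hw hx hy hz
    grind
  rcases coincidence with rfl | rfl | rfl | rfl | rfl | rfl
  · exact hL' w y z
  · exact (hL' w x z).swap_middle
  · exact (hL' w x y).swap_middle.swap_right hL hR
  · exact rfl
  · exact (hR' x w y).swap_middle
  · exact hR' y w x

namespace IsTrimedial

theorem rightSemimedial (h : IsTrimedial Q) : RightSemimedial Q := by
  intro x y z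
  apply h x y z <;> exact Subsemigroup.subset_closure (by simp)

theorem cubeMedial (h : IsTrimedial Q) : CubeMedial Q := by
  intro x u v
  have hx : x ∈ Subsemigroup.closure {x, u, v} := Subsemigroup.subset_closure (by simp)
  exact h x u v x (x * x) u v hx (mul_mem hx hx) (Subsemigroup.subset_closure (by simp))
    (Subsemigroup.subset_closure (by simp))

end IsTrimedial

theorem isTrimedial_of_rightSemimedial_of_cubeMedial (hQ : IsQuasigroup Q)
    (hR : RightSemimedial Q) (hC : CubeMedial Q) : IsTrimedial Q := by
  have := hQ.isCancelMul
  have hL := leftSemimedial hQ hR hC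
  intro a b c w x y z hw hx hy hz
  refine medialAt_of_mem_closure hQ hL hR hC ?_ w hw x hx y hy z hz
  exact fun _ hw _ hx _ hy _ hz => medialAt_of_mem_triple hL hR hw hx hy hz

end

theorem stmt_2 {Q : Type*} [Mul Q] (hQ : IsQuasigroup Q) :
    IsTrimedial Q ↔
      ((∀ x y z : Q, (y * z) * (x * x) = (y * x) * (z * x)) ∧
       (∀ x u v : Q, (x * (x * x)) * (u * v) = (x * u) * ((x * x) * v))) :=
  ⟨fun h => ⟨h.rightSemimedial, h.cubeMedial⟩,
    fun ⟨hR, hC⟩ => isTrimedial_of_rightSemimedial_of_cubeMedial hQ hR hC⟩
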